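/- Let D = (V, A) be a digraph, k ≥ 0 an integer, c_1, …, c_{k+1} ≤ |V| integers, and U_1, …, U_{k+1} ⊆ V with |U_i| ≤ c_i for 1 ≤ i ≤ k+1. Then there exist pairwise arc-disjoint spanning branchings F_1, …, F_{k+1} with R(F_i) ⊇ U_i and |R(F_i)| = c_i for 1 ≤ i ≤ k+1 if and only if for every subset I ⊆ {1, …, k+1} and every subpartition P of V: Σ_{X∈P} d_A^-(X) ≥ Σ_{X∈P} |{i ∈ I : X ∩ U_i = ∅}| − Σ_{i∈I} (c_i − |U_i|). -/

import Mathlib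

/-!
Digraphs may have parallel arcs but no loops.  We model a digraph `D = (V, A)` by a finite
vertex type `V`, a finite arc type `α` and maps `tail head : α → V` with `tail a ≠ head a`.
Subdigraphs are given by their arc sets (`Finset α`) together with vertex sets (`Finset V`).
-/

attribute [local instance] Classical.propDecidable

/-- One step from `u` to `w` along an arc of the arc set `B`. -/
def DiStep {V α : Type} (tail head : α → V) (B : Finset α) (u w : V) : Prop :=
  ∃ a ∈ B, tail a = u ∧ head a = w

/-- `w` is reachable from `u` by a directed path using arcs of `B`. -/
def DiReach {V α : Type} (tail head : α → V) (B : Finset α) (u w : V) : Prop :=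
  Relation.ReflTransGen (DiStep tail head B) u w

/-- `d_B^-(X)`: the number of arcs of `B` with tail outside `X` and head in `X`. -/
noncomputable def inDeg {V α : Type} (tail head : α → V) (B : Finset α) (X : Finset V) : ℕ :=
  (B.filter fun a => tail a ∉ X ∧ head a ∈ X).card

/-- The arc set `B` is an `r`-arborescence with vertex set `S`:  all arcs have both ends in
`S`, the root `r` has in-degree `0`, every other vertex of `S` has in-degree exactly `1`, and
every vertex of `S` is reachable from `r` (hence there is exactly one directed path from `r`
to each vertex, and the underlying graph is a tree). -/
def IsArborescence {V α : Type} (tail head : α → V) (S : Finset V) (B : Finset α)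
    (r : V) : Prop :=
  r ∈ S ∧ (∀ a ∈ B, tail a ∈ S ∧ head a ∈ S) ∧
    (∀ a ∈ B, head a ≠ r) ∧
    (∀ v ∈ S, v ≠ r → (B.filter fun a => head a = v).card = 1) ∧
    ∀ v ∈ S, DiReach tail head B r v

/-- The arc set `B` is a branching with vertex set `S` and root set `R`: every component is
an arborescence rooted at the member of `R` it contains. -/
def IsBranching {V α : Type} (tail head : α → V) (S : Finset V) (B : Finset α)
    (R : Finset V) : Prop :=
  R ⊆ S ∧ (∀ a ∈ B, tail a ∈ S ∧ head a ∈ S) ∧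
    (∀ r ∈ R, ∀ a ∈ B, head a ≠ r) ∧
    (∀ v ∈ S, v ∉ R → (B.filter fun a => head a = v).card = 1) ∧
    ∀ v ∈ S, ∃ r ∈ R, DiReach tail head B r v

/-- The arc set of the component of a branching `B` rooted at `r`. -/
noncomputable def compArcs {V α : Type} (tail head : α → V) (B : Finset α) (r : V) :
    Finset α :=
  B.filter fun a => DiReach tail head B r (head a)

/-- A subpartition of the vertex set: a family of pairwise disjoint nonempty subsets. -/
def IsSubpartition {V : Type} (P : Finset (Finset V)) : Prop :=
  (∀ X ∈ P, X.Nonempty) ∧ ∀ X ∈ P, ∀ Y ∈ P, X ≠ Y → Disjoint X Y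

/-!
By Edmonds' theorem, arc-disjoint spanning branchings with root sets `R i` exist if and only if
every nonempty `X` is entered by at least as many arcs as there are `i` with `X ∩ R i = ∅`.  (By
Lovász's argument: grow the branchings arc by arc, taking the next arc inside a minimal set for
which this inequality is tight.)  So the task is to enlarge the `U i` to such root sets, and
in-degree enters only through its submodularity.

The roots are added one at a time.  If no vertex `v` can be added to `U i`, each `v ∉ U i` comes
with a violated inequality, given by indices `I v` and a subpartition `P v`.  Put all these
subpartitions together, labelling each `X ∈ P v` by the indices of `I v` it misses.  Uncrossing
`(X, L)` and `(Y, K)` into `(X ∩ Y, L ∪ K)` and `(X ∪ Y, L ∩ K)` makes the family laminar, and a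
laminar family splits into subpartitions again by repeatedly removing its minimal members.  Summing
the hypothesis over these subpartitions contradicts the sum of the violated inequalities, because
the sets of `P v` labelled `i` all avoid `v`, which leaves one subpartition too few for `i`.
-/

open Finset

section Uncrossing

variable {L : Type*} [Lattice L] [Finite L]

theorem ncard_Iic_add_ncard_Iic_lt {a b : L} (hab : ¬a ≤ b) (hba : ¬b ≤ a) :
    (Set.Iic a).ncard + (Set.Iic b).ncard <
      (Set.Iic (a ⊓ b)).ncard + (Set.Iic (a ⊔ b)).ncard := by
  have hunion : Set.Iic a ∪ Set.Iic b ⊂ Set.Iic (a ⊔ b) := by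
    refine (Set.ssubset_iff_of_subset ?_).2 ⟨a ⊔ b, le_rfl, ?_⟩
    · exact Set.union_subset (Set.Iic_subset_Iic.2 le_sup_left) (Set.Iic_subset_Iic.2 le_sup_right)
    · rintro (h | h)
      · exact hba (le_sup_right.trans h)
      · exact hab (le_sup_left.trans h)
  rw [← Set.ncard_union_add_ncard_inter, Set.Iic_inter_Iic, add_comm]
  exact Nat.add_lt_add_left (Set.ncard_lt_ncard hunion) _

-- Among the families of the same size satisfying `Q`, the one maximizing the total size of the
-- lower sets `Iic a` is uncrossed.
theorem exists_uncrossed {Q : Multiset L → Prop} {Crossing : L → L → Prop}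
    (hQ : ∀ a b M, Crossing a b → Q (a ::ₘ b ::ₘ M) → Q ((a ⊓ b) ::ₘ (a ⊔ b) ::ₘ M))
    {M : Multiset L} (hM : Q M) :
    ∃ M', Q M' ∧ ∀ a ∈ M', ∀ b ∈ M', Crossing a b → a ≤ b ∨ b ≤ a := by
  let candidates : Set (Multiset L) := {M' | M'.card = M.card ∧ Q M'}
  have hfinite : candidates.Finite :=
    (Set.toFinite (Set.range ((↑) : Sym L M.card → Multiset L))).subset
      fun M' hM' ↦ ⟨⟨M', hM'.1⟩, rfl⟩
  obtain ⟨M', ⟨hcard, hQM'⟩, hmax⟩ := Set.exists_max_image candidates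
    (fun M' ↦ (M'.map fun a ↦ (Set.Iic a).ncard).sum) hfinite ⟨M, rfl, hM⟩
  refine ⟨M', hQM', fun a ha b hb hcross ↦ ?_⟩
  by_contra! ⟨hab, hba⟩
  obtain ⟨N, rfl⟩ := Multiset.exists_cons_of_mem ha
  obtain ⟨G, rfl⟩ := Multiset.exists_cons_of_mem
    ((Multiset.mem_cons.1 hb).resolve_left fun h ↦ hba h.le)
  have huncrossed := hmax _ ⟨by simpa using hcard, hQ a b G hcross hQM'⟩
  simp only [Multiset.map_cons, Multiset.sum_cons] at huncrossed
  have := ncard_Iic_add_ncard_Iic_lt hab hba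
  lia

end Uncrossing

section InsertAt

variable {ι β : Type*}

/-- The family obtained from a family of sets by adding the element `x` to its `i`-th member. It is
applied both to families of root sets and to families of arc sets. -/
noncomputable def insertAt (U : ι → Finset β) (i : ι) (x : β) : ι → Finset β :=
  Function.update U i (insert x (U i))

variable (U : ι → Finset β) (i : ι) (x : β)

theorem insertAt_self : insertAt U i x i = insert x (U i) :=
  Function.update_self ..

variable {i} in
theorem insertAt_of_ne {j : ι} (hj : j ≠ i) : insertAt U i x j = U j :=
  Function.update_of_ne hj ..

theorem subset_insertAt (j : ι) : U j ⊆ insertAt U i x j := by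
  by_cases hj : j = i
  · rw [hj, insertAt_self]
    exact subset_insert _ _
  · rw [insertAt_of_ne U x hj]

variable {U i x} in
theorem lt_insertAt (hx : x ∉ U i) : U < insertAt U i x := by
  refine Pi.lt_def.2 ⟨subset_insertAt U i x, i, ?_⟩
  rw [insertAt_self]
  exact ssubset_insert hx

variable {U i x} in
theorem card_insertAt (hx : x ∉ U i) (j : ι) :
    #(insertAt U i x j) = #(U j) + Pi.single (M := fun _ ↦ ℕ) i 1 j := by
  by_cases hj : j = i
  · subst hj
    rw [insertAt_self, card_insert_of_notMem hx, Pi.single_eq_same]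
  · rw [insertAt_of_ne U x hj, Pi.single_eq_of_ne hj, add_zero]

end InsertAt

section Missed

variable {V ι : Type*}

/-- The indices in `I` whose root set does not meet `X`; each of the corresponding branchings needs
an arc entering `X`. -/
noncomputable def missed (U : ι → Finset V) (I : Finset ι) (X : Finset V) : Finset ι :=
  {i ∈ I | Disjoint X (U i)}

variable {U : ι → Finset V} {I : Finset ι} {X Y : Finset V} {i : ι}

theorem mem_missed : i ∈ missed U I X ↔ i ∈ I ∧ Disjoint X (U i) :=
  mem_filter

theorem missed_anti_right (h : X ⊆ Y) : missed U I Y ⊆ missed U I X :=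
  monotone_filter_right _ fun _ _ hY ↦ hY.mono_left h

theorem missed_union : missed U I (X ∪ Y) = missed U I X ∩ missed U I Y := by
  ext i
  simp only [mem_missed, mem_inter, disjoint_union_left]
  tauto

theorem missed_union_missed_subset : missed U I X ∪ missed U I Y ⊆ missed U I (X ∩ Y) :=
  union_subset (missed_anti_right inter_subset_left) (missed_anti_right inter_subset_right)

theorem card_missed_add_card_missed_le :
    #(missed U I X) + #(missed U I Y) ≤ #(missed U I (X ∩ Y)) + #(missed U I (X ∪ Y)) := by
  rw [← card_union_add_card_inter, ← missed_union]
  exact Nat.add_le_add_right (card_le_card missed_union_missed_subset) _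

theorem card_missed_add_card_missed_lt (hi : i ∈ missed U I (X ∩ Y)) (hX : ¬Disjoint X (U i))
    (hY : ¬Disjoint Y (U i)) :
    #(missed U I X) + #(missed U I Y) < #(missed U I (X ∩ Y)) + #(missed U I (X ∪ Y)) := by
  have hunion : missed U I X ∪ missed U I Y ⊂ missed U I (X ∩ Y) := by
    refine (ssubset_iff_of_subset missed_union_missed_subset).2 ⟨i, hi, ?_⟩
    simp only [mem_union, mem_missed]
    tauto
  rw [← card_union_add_card_inter, ← missed_union]
  exact Nat.add_lt_add_right (card_lt_card hunion) _

theorem missed_insertAt (v : V) :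
    missed (insertAt U i v) I X = if v ∈ X then (missed U I X).erase i else missed U I X := by
  ext j
  by_cases hj : j = i
  · subst hj
    split_ifs with hv <;> simp [mem_missed, insertAt_self, hv]
  · split_ifs <;> simp [mem_missed, insertAt_of_ne U v hj, hj]

theorem missed_insertAt_subset (v : V) : missed (insertAt U i v) I X ⊆ missed U I X := by
  rw [missed_insertAt]
  split_ifs
  · exact erase_subset _ _
  · rfl

theorem missed_insertAt_of_notMem (hi : i ∉ I) (v : V) :
    missed (insertAt U i v) I X = missed U I X := by
  rw [missed_insertAt, erase_eq_of_notMem fun h ↦ hi (mem_missed.1 h).1, ite_self]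

theorem card_missed_le_card_missed_add (R : ι → Finset V) :
    #(missed U I X) ≤ #(missed R I X) + ∑ i ∈ I, #(X ∩ (R i \ U i)) := by
  simp only [missed, card_filter]
  rw [← sum_add_distrib]
  refine sum_le_sum fun i _ ↦ ?_
  by_cases hU : Disjoint X (U i) <;> by_cases hR : Disjoint X (R i) <;> simp only [hU, hR, if_true,
    if_false, Nat.zero_le, Nat.le_add_right, zero_add]
  have hinter : X ∩ (R i \ U i) = X ∩ R i := by
    rw [← inter_sdiff_assoc, sdiff_eq_self_of_disjoint (hU.mono_left inter_subset_left)]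
  rwa [hinter, Nat.one_le_iff_ne_zero, ne_eq, card_eq_zero, ← disjoint_iff_inter_eq_empty]

end Missed

section Conditions

variable {V : Type} {ι : Type*}

/-- Submodularity of a set function on intersecting pairs of sets. -/
def IsIntersectingSubmodular (d : Finset V → ℕ) : Prop :=
  ∀ X Y, ¬Disjoint X Y → d (X ∩ Y) + d (X ∪ Y) ≤ d X + d Y

/-- Edmonds' condition for the root sets `R i`, with a set function `d` in place of in-degree. -/
def CutCondition [Fintype ι] (d : Finset V → ℕ) (R : ι → Finset V) : Prop :=
  ∀ X : Finset V, X.Nonempty → #(missed R univ X) ≤ d X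

/-- The condition under which `s i` further roots can be added to each root set `U i`, with a set
function `d` in place of in-degree. All terms are natural numbers, hence `s i` in place of the
difference `c i - #(U i)` and on the right-hand side. -/
def SubpartitionCondition (d : Finset V → ℕ) (U : ι → Finset V) (s : ι → ℕ) : Prop :=
  ∀ (I : Finset ι) (P : Finset (Finset V)), IsSubpartition P →
    ∑ X ∈ P, #(missed U I X) ≤ ∑ X ∈ P, d X + ∑ i ∈ I, s i

variable {d : Finset V → ℕ} {U : ι → Finset V} {s : ι → ℕ}

theorem IsSubpartition.singleton {X : Finset V} (hX : X.Nonempty) : IsSubpartition {X} := by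
  refine ⟨by simpa using hX, fun A hA B hB hAB ↦ absurd ?_ hAB⟩
  rw [mem_singleton.1 hA, mem_singleton.1 hB]

theorem IsSubpartition.sum_card_inter_le {P : Finset (Finset V)} (hP : IsSubpartition P)
    (Z : Finset V) : ∑ X ∈ P, #(X ∩ Z) ≤ #Z := by
  rw [← card_biUnion fun X hX Y hY hXY ↦
    (hP.2 X hX Y hY hXY).mono inter_subset_left inter_subset_left]
  exact card_le_card (biUnion_subset.2 fun _ _ ↦ inter_subset_right)

theorem SubpartitionCondition.cutCondition [Fintype ι] (h : SubpartitionCondition d U 0) :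
    CutCondition d U := fun X hX ↦ by
  simpa using h univ {X} (.singleton hX)

theorem CutCondition.subpartitionCondition [Fintype ι] {R : ι → Finset V} (h : CutCondition d R)
    (U : ι → Finset V) : SubpartitionCondition d U fun i ↦ #(R i \ U i) := fun I P hP ↦
  calc ∑ X ∈ P, #(missed U I X)
    _ ≤ ∑ X ∈ P, (#(missed R univ X) + ∑ i ∈ I, #(X ∩ (R i \ U i))) :=
      sum_le_sum fun _ _ ↦ (card_missed_le_card_missed_add R).trans
        (Nat.add_le_add_right (card_le_card (filter_subset_filter _ (subset_univ I))) _)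
    _ = ∑ X ∈ P, #(missed R univ X) + ∑ i ∈ I, ∑ X ∈ P, #(X ∩ (R i \ U i)) := by
      rw [sum_add_distrib, sum_comm]
    _ ≤ ∑ X ∈ P, d X + ∑ i ∈ I, #(R i \ U i) :=
      Nat.add_le_add (sum_le_sum fun X hX ↦ h X (hP.1 X hX))
        (sum_le_sum fun _ _ ↦ hP.sum_card_inter_le _)

theorem subpartitionCondition_iff_int {c : ι → ℕ} (hc : ∀ i, #(U i) + s i = c i) :
    SubpartitionCondition d U s ↔
      ∀ (I : Finset ι) (P : Finset (Finset V)), IsSubpartition P →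
        (∑ X ∈ P, (#{i ∈ I | X ∩ U i = ∅} : ℤ)) - (∑ i ∈ I, ((c i : ℤ) - (#(U i) : ℤ))) ≤
          ∑ X ∈ P, (d X : ℤ) := by
  simp only [SubpartitionCondition, missed, disjoint_iff_inter_eq_empty, ← hc, Nat.cast_add,
    add_sub_cancel_left, sub_le_iff_le_add]
  norm_cast

end Conditions

section LabelledSets

variable {V : Type} {ι : Type*}

/-- A vertex set `p.1` labelled by the indices *not* in `p.2`. Storing the complement of the label
makes `⊓` and `⊔` the two results of uncrossing. -/
abbrev LabelledSet (V ι : Type*) : Type _ := Finset V × Finset ι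

/-- The number of members of the family `M` that contain `v` and carry the label `j`. -/
noncomputable def coverage (M : Multiset (LabelledSet V ι)) (v : V) (j : ι) : ℕ :=
  M.countP fun p ↦ v ∈ p.1 ∧ j ∉ p.2

/-- Families of labelled sets that can still be compared with `m j` subpartitions for each label
`j`: a set misses the root sets of its labels, and each vertex is covered at most `m j` times by
sets labelled `j`. -/
structure IsAdmissible (U : ι → Finset V) (m : ι → ℕ) (M : Multiset (LabelledSet V ι)) : Prop where
  nonempty : ∀ p ∈ M, p.1.Nonempty
  disjoint : ∀ p ∈ M, ∀ j ∉ p.2, Disjoint p.1 (U j)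
  coverage_le : ∀ v j, coverage M v j ≤ m j

/-- Laminarity: intersecting members are comparable, the smaller one carrying the larger label. -/
def IsLaminar (M : Multiset (LabelledSet V ι)) : Prop :=
  ∀ p ∈ M, ∀ q ∈ M, ¬Disjoint p.1 q.1 → p ≤ q ∨ q ≤ p

/-- The layer of a labelled family that is peeled off as one subpartition. -/
noncomputable def minimalMembers (M : Multiset (LabelledSet V ι)) : Finset (LabelledSet V ι) :=
  {p ∈ M.toFinset | Minimal (· ∈ M) p}

variable {U : ι → Finset V} {m : ι → ℕ} {M N : Multiset (LabelledSet V ι)}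
  {p q : LabelledSet V ι} {v : V} {j : ι}

theorem coverage_add : coverage (M + N) v j = coverage M v j + coverage N v j :=
  Multiset.countP_add ..

theorem coverage_sum {κ : Type*} (W : Finset κ) (M : κ → Multiset (LabelledSet V ι)) :
    coverage (∑ w ∈ W, M w) v j = ∑ w ∈ W, coverage (M w) v j :=
  map_sum (Multiset.countPAddMonoidHom fun p : LabelledSet V ι ↦ v ∈ p.1 ∧ j ∉ p.2) M W

theorem coverage_pos : 0 < coverage M v j ↔ ∃ p ∈ M, v ∈ p.1 ∧ j ∉ p.2 :=
  Multiset.countP_pos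

theorem coverage_inf_cons_sup_cons_le :
    coverage ((p ⊓ q) ::ₘ (p ⊔ q) ::ₘ M) v j ≤ coverage (p ::ₘ q ::ₘ M) v j := by
  simp only [coverage, Multiset.countP_cons, Prod.fst_inf, Prod.fst_sup, Prod.snd_inf,
    Prod.snd_sup, inf_eq_inter, sup_eq_union, mem_inter, mem_union]
  grind

theorem card_compl_inf_add_card_compl_sup [Fintype ι] :
    #(p ⊓ q).2ᶜ + #(p ⊔ q).2ᶜ = #p.2ᶜ + #q.2ᶜ := by
  simp only [Prod.snd_inf, Prod.snd_sup, inf_eq_inter, sup_eq_union, compl_inter, compl_union,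
    card_union_add_card_inter]

theorem IsLaminar.mono (h : IsLaminar M) (hNM : N ≤ M) : IsLaminar N := fun p hp q hq ↦
  h p (Multiset.mem_of_le hNM hp) q (Multiset.mem_of_le hNM hq)

theorem IsAdmissible.uncross (hpq : ¬Disjoint p.1 q.1) (h : IsAdmissible U m (p ::ₘ q ::ₘ M)) :
    IsAdmissible U m ((p ⊓ q) ::ₘ (p ⊔ q) ::ₘ M) where
  nonempty := by
    have hsup : (p ⊔ q).1.Nonempty := (h.nonempty p (by simp)).mono subset_union_left
    simp only [Multiset.forall_mem_cons]
    exact ⟨not_disjoint_iff_nonempty_inter.1 hpq, hsup, fun r hr ↦ h.nonempty r (by simp [hr])⟩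
  disjoint := by
    have hp := h.disjoint p (by simp)
    have hq := h.disjoint q (by simp)
    simp only [Multiset.forall_mem_cons]
    refine ⟨fun j hj ↦ ?_, fun j hj ↦ ?_, fun r hr ↦ h.disjoint r (by simp [hr])⟩
    · by_cases hjp : j ∈ p.2
      · exact (hq j fun hjq ↦ hj (mem_inter.2 ⟨hjp, hjq⟩)).mono_left inter_subset_right
      · exact (hp j hjp).mono_left inter_subset_left
    · exact disjoint_union_left.2 ⟨hp j fun hjp ↦ hj (mem_union_left _ hjp),
        hq j fun hjq ↦ hj (mem_union_right _ hjq)⟩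
  coverage_le v j := coverage_inf_cons_sup_cons_le.trans (h.coverage_le v j)

theorem exists_laminar [Finite V] [Fintype ι] {d : Finset V → ℕ} (hd : IsIntersectingSubmodular d)
    (hM : IsAdmissible U m M) :
    ∃ M', IsAdmissible U m M' ∧ IsLaminar M' ∧
      (M'.map fun p ↦ #p.2ᶜ).sum = (M.map fun p ↦ #p.2ᶜ).sum ∧
      (M'.map fun p ↦ d p.1).sum ≤ (M.map fun p ↦ d p.1).sum := by
  let Q (M' : Multiset (LabelledSet V ι)) : Prop := IsAdmissible U m M' ∧
    (M'.map fun p ↦ #p.2ᶜ).sum = (M.map fun p ↦ #p.2ᶜ).sum ∧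
    (M'.map fun p ↦ d p.1).sum ≤ (M.map fun p ↦ d p.1).sum
  have huncross (p q : LabelledSet V ι) (N : Multiset (LabelledSet V ι))
      (hpq : ¬Disjoint p.1 q.1) (hN : Q (p ::ₘ q ::ₘ N)) : Q ((p ⊓ q) ::ₘ (p ⊔ q) ::ₘ N) := by
    obtain ⟨hadm, hlabel, hdsum⟩ := hN
    refine ⟨hadm.uncross hpq, ?_⟩
    have hsubmod : d (p ⊓ q).1 + d (p ⊔ q).1 ≤ d p.1 + d q.1 := hd p.1 q.1 hpq
    have hcompl := card_compl_inf_add_card_compl_sup (p := p) (q := q)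
    simp only [Multiset.map_cons, Multiset.sum_cons] at hlabel hdsum ⊢
    lia
  obtain ⟨M', ⟨hadm, hlabel, hdsum⟩, hlam⟩ := exists_uncrossed huncross ⟨hM, rfl, le_rfl⟩
  exact ⟨M', hadm, hlam, hlabel, hdsum⟩

end LabelledSets

section Peeling

variable {V : Type} {ι : Type*} {U : ι → Finset V} {m : ι → ℕ}
  {M : Multiset (LabelledSet V ι)} {p q : LabelledSet V ι} {v : V} {j : ι}

theorem mem_minimalMembers : p ∈ minimalMembers M ↔ Minimal (· ∈ M) p := by
  rw [minimalMembers, mem_filter, Multiset.mem_toFinset, and_iff_right_iff_imp]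
  exact Minimal.prop

theorem minimalMembers_val_le : (minimalMembers M).val ≤ M :=
  (Multiset.le_iff_subset (minimalMembers M).nodup).2 fun _ hp ↦ (mem_minimalMembers.1 hp).prop

theorem exists_mem_minimalMembers_le (hp : p ∈ M) : ∃ q ∈ minimalMembers M, q ≤ p := by
  obtain ⟨q, hqp, hq⟩ := exists_minimal_le_of_wellFoundedLT (· ∈ M) p hp
  exact ⟨q, mem_minimalMembers.2 hq, hqp⟩

theorem minimalMembers_nonempty (hM : M ≠ 0) : (minimalMembers M).Nonempty := by
  obtain ⟨p, hp⟩ := Multiset.exists_mem_of_ne_zero hM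
  obtain ⟨q, hq, -⟩ := exists_mem_minimalMembers_le hp
  exact ⟨q, hq⟩

/-- What remains of a labelled family after its layer of minimal members is peeled off. -/
noncomputable def peel (M : Multiset (LabelledSet V ι)) : Multiset (LabelledSet V ι) :=
  M - (minimalMembers M).val

theorem minimalMembers_add_peel (M : Multiset (LabelledSet V ι)) :
    (minimalMembers M).val + peel M = M :=
  add_tsub_cancel_of_le minimalMembers_val_le

theorem peel_le (M : Multiset (LabelledSet V ι)) : peel M ≤ M :=
  tsub_le_self

theorem peel_lt (hM : M ≠ 0) : peel M < M := by
  refine (peel_le M).lt_of_ne fun h ↦ (minimalMembers_nonempty hM).ne_empty ?_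
  have := minimalMembers_add_peel M
  rwa [h, add_eq_right, val_eq_zero] at this

theorem sum_map_eq_sum_minimalMembers_add (f : LabelledSet V ι → ℕ) (M) :
    (M.map f).sum = ∑ p ∈ minimalMembers M, f p + ((peel M).map f).sum := by
  conv_lhs => rw [← minimalMembers_add_peel M, Multiset.map_add, Multiset.sum_add]
  rfl

theorem IsLaminar.eq_of_mem_minimalMembers (hM : IsLaminar M) (hp : p ∈ minimalMembers M)
    (hq : q ∈ minimalMembers M) (hpq : ¬Disjoint p.1 q.1) : p = q := by
  rw [mem_minimalMembers] at hp hq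
  rcases hM p hp.prop q hq.prop hpq with hle | hle
  · exact hq.eq_of_le hp.prop hle
  · exact (hp.eq_of_le hq.prop hle).symm

theorem IsLaminar.injOn_fst_minimalMembers (hM : IsLaminar M) (hne : ∀ p ∈ M, p.1.Nonempty) :
    Set.InjOn Prod.fst (minimalMembers M : Set (LabelledSet V ι)) := fun p hp q hq hpq ↦ by
  refine hM.eq_of_mem_minimalMembers hp hq ?_
  rw [← hpq, disjoint_self_iff_empty]
  exact (hne p (mem_minimalMembers.1 hp).prop).ne_empty

theorem IsLaminar.isSubpartition_image_minimalMembers (hM : IsLaminar M)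
    (hne : ∀ p ∈ M, p.1.Nonempty) : IsSubpartition ((minimalMembers M).image Prod.fst) := by
  simp only [IsSubpartition, forall_mem_image]
  refine ⟨fun p hp ↦ hne p (mem_minimalMembers.1 hp).prop, fun p hp q hq hpq ↦ ?_⟩
  by_contra hdisj
  exact hpq (congrArg Prod.fst (hM.eq_of_mem_minimalMembers hp hq hdisj))

theorem coverage_lt_coverage {u : V} (hle : ∀ p ∈ M, v ∈ p.1 → j ∉ p.2 → u ∈ p.1) (hp : p ∈ M)
    (hu : u ∈ p.1) (hv : v ∉ p.1) (hj : j ∉ p.2) : coverage M v j < coverage M u j := by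
  simp only [coverage, Multiset.countP_eq_card_filter]
  refine Multiset.card_lt_card (lt_of_le_of_ne ?_ fun heq ↦ ?_)
  · refine Multiset.le_filter.2 ⟨Multiset.filter_le _ _, fun q hq ↦ ?_⟩
    obtain ⟨hqM, hvq, hjq⟩ := Multiset.mem_filter.1 hq
    exact ⟨hle q hqM hvq hjq, hjq⟩
  · have hmem : p ∈ M.filter fun p ↦ v ∈ p.1 ∧ j ∉ p.2 :=
      heq ▸ Multiset.mem_filter.2 ⟨hp, hu, hj⟩
    exact hv (Multiset.mem_filter.1 hmem).2.1

-- The members covering `v` with label `j` form a chain; a minimal member below that chain carries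
-- the label `j` too, so its vertices are covered once more than `v` unless it contains `v`.
theorem IsLaminar.exists_coverage_lt (hM : IsLaminar M) (hne : ∀ p ∈ M, p.1.Nonempty)
    (hpos : 0 < coverage M v j) (hzero : coverage (minimalMembers M).val v j = 0) :
    ∃ u, coverage M v j < coverage M u j := by
  obtain ⟨a, ha⟩ := exists_minimal_of_wellFoundedLT (fun p ↦ p ∈ M ∧ v ∈ p.1 ∧ j ∉ p.2)
    (coverage_pos.1 hpos)
  obtain ⟨haM, hva, hja⟩ := ha.prop
  obtain ⟨b, hb, hba⟩ := exists_mem_minimalMembers_le haM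
  have hbM : b ∈ M := (mem_minimalMembers.1 hb).prop
  have hjb : j ∉ b.2 := fun h ↦ hja (hba.2 h)
  have hvb : v ∉ b.1 := fun h ↦ (coverage_pos.2 ⟨b, hb, h, hjb⟩).ne' hzero
  obtain ⟨u, hu⟩ := hne b hbM
  refine ⟨u, coverage_lt_coverage (fun q hq hvq hjq ↦ ?_) hbM hu hvb hjb⟩
  have haq : a ≤ q := by
    rcases hM a haM q hq (not_disjoint_iff.2 ⟨v, hva, hvq⟩) with h | h
    · exact h
    · exact ha.le_of_le ⟨hq, hvq, hjq⟩ h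
  exact haq.1 (hba.1 hu)

theorem IsAdmissible.sub_one_peel (hM : IsAdmissible U m M) (hlam : IsLaminar M) :
    IsAdmissible U (m - 1) (peel M) where
  nonempty p hp := hM.nonempty p (Multiset.mem_of_le (peel_le M) hp)
  disjoint p hp := hM.disjoint p (Multiset.mem_of_le (peel_le M) hp)
  coverage_le v j := by
    have hsplit : coverage M v j =
        coverage (minimalMembers M).val v j + coverage (peel M) v j := by
      rw [← coverage_add, minimalMembers_add_peel]
    have hle := hM.coverage_le v j
    rw [Pi.sub_apply, Pi.one_apply]
    by_contra! hlt
    obtain ⟨u, hu⟩ := hlam.exists_coverage_lt hM.nonempty (v := v) (j := j) (by lia) (by lia)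
    have := hM.coverage_le u j
    lia

variable [Fintype ι] {d : Finset V → ℕ} {s : ι → ℕ}

theorem SubpartitionCondition.sum_minimalMembers_le (hd : SubpartitionCondition d U s)
    (hM : IsAdmissible U m M) (hlam : IsLaminar M) :
    ∑ p ∈ minimalMembers M, #p.2ᶜ ≤ ∑ p ∈ minimalMembers M, d p.1 + ∑ j with 0 < m j, s j := by
  have hinj := hlam.injOn_fst_minimalMembers hM.nonempty
  have hlabel (p) (hp : p ∈ minimalMembers M) : p.2ᶜ ⊆ missed U {j | 0 < m j} p.1 := fun j hj ↦ by
    have hpM := (mem_minimalMembers.1 hp).prop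
    rw [mem_compl] at hj
    obtain ⟨u, hu⟩ := hM.nonempty p hpM
    have hpos : 0 < coverage M u j := coverage_pos.2 ⟨p, hpM, hu, hj⟩
    exact mem_missed.2 ⟨by simpa using hpos.trans_le (hM.coverage_le u j), hM.disjoint p hpM j hj⟩
  have hsum := hd {j | 0 < m j} _ (hlam.isSubpartition_image_minimalMembers hM.nonempty)
  rw [sum_image hinj, sum_image hinj] at hsum
  exact (sum_le_sum fun p hp ↦ card_le_card (hlabel p hp)).trans hsum

theorem sum_mul_eq_sum_filter_add (m s : ι → ℕ) :
    ∑ j, m j * s j = ∑ j with 0 < m j, s j + ∑ j, (m - 1) j * s j := by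
  rw [sum_filter, ← sum_add_distrib]
  refine sum_congr rfl fun j _ ↦ ?_
  rcases hm : m j with _ | n
  · simp [hm]
  · simp [hm, Nat.succ_mul, add_comm]

theorem SubpartitionCondition.sum_card_compl_le_of_isLaminar (hd : SubpartitionCondition d U s)
    (hM : IsAdmissible U m M) (hlam : IsLaminar M) :
    (M.map fun p ↦ #p.2ᶜ).sum ≤ (M.map fun p ↦ d p.1).sum + ∑ j, m j * s j := by
  induction M using Multiset.strongInductionOn generalizing m with
  | _ M ih =>
    by_cases hzero : M = 0
    · simp [hzero]
    have hlayer := hd.sum_minimalMembers_le hM hlam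
    have hpeel := ih (peel M) (peel_lt hzero) (hM.sub_one_peel hlam) (hlam.mono (peel_le M))
    rw [sum_map_eq_sum_minimalMembers_add, sum_map_eq_sum_minimalMembers_add (fun p ↦ d p.1),
      sum_mul_eq_sum_filter_add]
    lia

theorem SubpartitionCondition.sum_card_compl_le [Finite V] (hd : SubpartitionCondition d U s)
    (hsub : IsIntersectingSubmodular d) (hM : IsAdmissible U m M) :
    (M.map fun p ↦ #p.2ᶜ).sum ≤ (M.map fun p ↦ d p.1).sum + ∑ j, m j * s j := by
  obtain ⟨M', hM', hlam, hlabel, hdsum⟩ := exists_laminar hsub hM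
  have := hd.sum_card_compl_le_of_isLaminar hM' hlam
  lia

end Peeling

section LabelledFamily

variable {V : Type} {ι : Type*} [Fintype ι] {U : ι → Finset V} {I : Finset ι}
  {P : Finset (Finset V)} {i : ι}

/-- The members of `P`, each labelled by the indices of `I` it misses. -/
noncomputable def labelledFamily (U : ι → Finset V) (I : Finset ι) (P : Finset (Finset V)) :
    Multiset (LabelledSet V ι) :=
  P.val.map fun X ↦ (X, (missed U I X)ᶜ)

theorem mem_labelledFamily {p : LabelledSet V ι} :
    p ∈ labelledFamily U I P ↔ ∃ X ∈ P, (X, (missed U I X)ᶜ) = p :=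
  Multiset.mem_map

theorem sum_map_sum_labelledFamily {κ : Type*} (f : LabelledSet V ι → ℕ) (W : Finset κ)
    (U : κ → ι → Finset V) (I : κ → Finset ι) (P : κ → Finset (Finset V)) :
    ((∑ w ∈ W, labelledFamily (U w) (I w) (P w)).map f).sum =
      ∑ w ∈ W, ∑ X ∈ P w, f (X, (missed (U w) (I w) X)ᶜ) := by
  rw [← Multiset.coe_mapAddMonoidHom, map_sum, ← Multiset.coe_sumAddMonoidHom, map_sum]
  refine sum_congr rfl fun w _ ↦ ?_
  simp only [labelledFamily, Multiset.coe_mapAddMonoidHom, Multiset.coe_sumAddMonoidHom,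
    Multiset.map_map]
  rfl

theorem IsSubpartition.coverage_labelledFamily_le (hP : IsSubpartition P) (u : V) (j : ι) :
    coverage (labelledFamily U I P) u j ≤ if j ∈ I ∧ u ∉ U j then 1 else 0 := by
  have hcount : coverage (labelledFamily U I P) u j = #{X ∈ P | u ∈ X ∧ j ∈ missed U I X} := by
    simp only [coverage, labelledFamily, Multiset.countP_map, mem_compl, not_not]
    rfl
  rw [hcount]
  split_ifs with h
  · refine card_le_one.2 fun X hX Y hY ↦ ?_
    rw [mem_filter] at hX hY
    by_contra hXY
    exact disjoint_left.1 (hP.2 X hX.1 Y hY.1 hXY) hX.2.1 hY.2.1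
  · refine (card_eq_zero.2 (filter_eq_empty_iff.2 fun X _ ⟨huX, hjX⟩ ↦ h ?_)).le
    obtain ⟨hj, hdisj⟩ := mem_missed.1 hjX
    exact ⟨hj, disjoint_left.1 hdisj huX⟩

variable [Fintype V] {I : V → Finset ι} {P : V → Finset (Finset V)}

-- The sets of `P u` labelled `i` avoid `u`, so `u` is covered by label `i` at most `#(U i)ᶜ - 1`
-- times.
theorem isAdmissible_sum_labelledFamily (hP : ∀ v ∉ U i, IsSubpartition (P v))
    (hI : ∀ v ∉ U i, i ∈ I v) :
    IsAdmissible U ((fun j ↦ #{v ∈ (U i)ᶜ | j ∈ I v}) - Pi.single i 1)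
      (∑ v ∈ (U i)ᶜ, labelledFamily (insertAt U i v) (I v) (P v)) where
  nonempty p hp := by
    obtain ⟨v, hv, hp⟩ := Multiset.mem_sum.1 hp
    obtain ⟨X, hX, rfl⟩ := mem_labelledFamily.1 hp
    exact (hP v (mem_compl.1 hv)).1 X hX
  disjoint p hp j hj := by
    obtain ⟨v, -, hp⟩ := Multiset.mem_sum.1 hp
    obtain ⟨X, -, rfl⟩ := mem_labelledFamily.1 hp
    rw [mem_compl, not_not] at hj
    exact (mem_missed.1 hj).2.mono_right (subset_insertAt U i v j)
  coverage_le u j := by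
    have hcov : coverage (∑ v ∈ (U i)ᶜ, labelledFamily (insertAt U i v) (I v) (P v)) u j ≤
        #{v ∈ (U i)ᶜ | j ∈ I v ∧ u ∉ insertAt U i v j} := by
      rw [coverage_sum, card_filter]
      exact sum_le_sum fun v hv ↦ (hP v (mem_compl.1 hv)).coverage_labelledFamily_le u j
    refine hcov.trans ?_
    rw [Pi.sub_apply]
    rcases ne_or_eq j i with hj | rfl
    · rw [Pi.single_eq_of_ne hj, Nat.sub_zero]
      exact card_le_card (monotone_filter_right _ fun _ _ h ↦ h.1)
    rw [Pi.single_eq_same]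
    by_cases hu : u ∈ U j
    · rw [filter_false_of_mem fun v _ h ↦ h.2 (subset_insertAt U j v j hu), card_empty]
      exact Nat.zero_le _
    · rw [← card_erase_of_mem (mem_filter.2 ⟨mem_compl.2 hu, hI u hu⟩)]
      refine card_le_card fun v hv ↦ ?_
      simp only [insertAt_self, mem_filter, mem_insert, mem_erase] at hv ⊢
      tauto

theorem sum_sum_eq_sum_card_mul {κ : Type*} (W : Finset κ) (I : κ → Finset ι) (s : ι → ℕ) :
    ∑ w ∈ W, ∑ j ∈ I w, s j = ∑ j, #{w ∈ W | j ∈ I w} * s j := by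
  simp only [card_filter, sum_mul, ite_mul, one_mul, zero_mul]
  rw [sum_comm]
  simp only [sum_ite_mem, univ_inter]

end LabelledFamily

section RootExtension

variable {V : Type} {ι : Type*} {d : Finset V → ℕ} {U : ι → Finset V} {s : ι → ℕ} {i : ι}

theorem sub_single_add_single (hs : s i ≠ 0) (j : ι) :
    s j - (Pi.single i 1 : ι → ℕ) j + (Pi.single i 1 : ι → ℕ) j = s j := by
  refine Nat.sub_add_cancel ?_
  rcases ne_or_eq j i with hj | rfl
  · rw [Pi.single_eq_of_ne hj]
    exact Nat.zero_le _
  · rw [Pi.single_eq_same]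
    exact Nat.one_le_iff_ne_zero.2 hs

theorem sum_sub_single_add (hs : s i ≠ 0) (I : Finset ι) :
    ∑ j ∈ I, (s - Pi.single i 1 : ι → ℕ) j + (if i ∈ I then 1 else 0) = ∑ j ∈ I, s j := by
  have hsingle : ∑ j ∈ I, (Pi.single i 1 : ι → ℕ) j = if i ∈ I then 1 else 0 := by
    simp [Pi.single_apply]
  rw [← hsingle, ← sum_add_distrib]
  exact sum_congr rfl fun j _ ↦ sub_single_add_single hs j

theorem SubpartitionCondition.exists_violation {v : V} (h : SubpartitionCondition d U s)
    (hs : s i ≠ 0) (hv : ¬SubpartitionCondition d (insertAt U i v) (s - Pi.single i 1)) :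
    ∃ I P, IsSubpartition P ∧ i ∈ I ∧
      ∑ X ∈ P, d X + ∑ j ∈ I, s j ≤ ∑ X ∈ P, #(missed (insertAt U i v) I X) := by
  simp only [SubpartitionCondition, not_forall, not_le] at hv
  obtain ⟨I, P, hP, hlt⟩ := hv
  have hsum := sum_sub_single_add hs I
  by_cases hi : i ∈ I
  · rw [if_pos hi] at hsum
    exact ⟨I, P, hP, hi, by lia⟩
  · have hIP := h I P hP
    simp only [missed_insertAt_of_notMem hi] at hlt
    rw [if_neg hi] at hsum
    lia

theorem SubpartitionCondition.exists_insertAt [Fintype V] [Finite ι]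
    (h : SubpartitionCondition d U s) (hd : IsIntersectingSubmodular d) (hs : s i ≠ 0)
    (hUi : U i ≠ univ) :
    ∃ v ∉ U i, SubpartitionCondition d (insertAt U i v) (s - Pi.single i 1) := by
  have := Fintype.ofFinite ι
  by_contra! hno
  have hviolation (v : V) : ∃ I P, v ∉ U i → IsSubpartition P ∧ i ∈ I ∧
      ∑ X ∈ P, d X + ∑ j ∈ I, s j ≤ ∑ X ∈ P, #(missed (insertAt U i v) I X) := by
    by_cases hv : v ∈ U i
    · exact ⟨∅, ∅, absurd hv⟩
    · obtain ⟨I, P, hIP⟩ := h.exists_violation hs (hno v hv)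
      exact ⟨I, P, fun _ ↦ hIP⟩
  choose I P hIP using hviolation
  let m (j : ι) : ℕ := #{v ∈ (U i)ᶜ | j ∈ I v}
  have hlower : ∑ v ∈ (U i)ᶜ, ∑ X ∈ P v, d X + ∑ j, m j * s j ≤
      ∑ v ∈ (U i)ᶜ, ∑ X ∈ P v, #(missed (insertAt U i v) (I v) X) := by
    rw [← sum_sum_eq_sum_card_mul, ← sum_add_distrib]
    exact sum_le_sum fun v hv ↦ (hIP v (mem_compl.1 hv)).2.2
  have hupper : ∑ v ∈ (U i)ᶜ, ∑ X ∈ P v, #(missed (insertAt U i v) (I v) X) ≤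
      ∑ v ∈ (U i)ᶜ, ∑ X ∈ P v, d X + ∑ j, (m - Pi.single i 1 : ι → ℕ) j * s j := by
    simpa only [sum_map_sum_labelledFamily, compl_compl] using h.sum_card_compl_le hd
      (isAdmissible_sum_labelledFamily (fun v hv ↦ (hIP v hv).1) fun v hv ↦ (hIP v hv).2.1)
  have hstrict : ∑ j, (m - Pi.single i 1 : ι → ℕ) j * s j < ∑ j, m j * s j := by
    obtain ⟨v, hv⟩ : ∃ v, v ∉ U i := by simpa [eq_univ_iff_forall] using hUi
    have hpos : 0 < m i := card_pos.2 ⟨v, mem_filter.2 ⟨mem_compl.2 hv, (hIP v hv).2.1⟩⟩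
    refine sum_lt_sum (fun j _ ↦ Nat.mul_le_mul_right _ (Nat.sub_le _ _)) ⟨i, mem_univ i, ?_⟩
    refine Nat.mul_lt_mul_of_pos_right ?_ (Nat.pos_of_ne_zero hs)
    simpa using hpos
  lia

variable [Fintype V] [Fintype ι]

theorem SubpartitionCondition.exists_cutCondition (h : SubpartitionCondition d U s)
    (hd : IsIntersectingSubmodular d) (hs : ∀ i, #(U i) + s i ≤ Fintype.card V) :
    ∃ R : ι → Finset V, (∀ i, U i ⊆ R i) ∧ (∀ i, #(R i) = #(U i) + s i) ∧ CutCondition d R := by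
  induction hn : ∑ i, s i generalizing s U with
  | zero =>
    obtain rfl : s = 0 := funext fun i ↦ sum_eq_zero_iff.1 hn i (mem_univ i)
    exact ⟨U, fun _ ↦ subset_rfl, fun _ ↦ rfl, h.cutCondition⟩
  | succ n ih =>
    obtain ⟨i, -, hi⟩ : ∃ i ∈ univ, s i ≠ 0 := exists_ne_zero_of_sum_ne_zero (by lia)
    have hUi : U i ≠ univ := fun hU ↦ by
      have := hs i
      rw [hU, card_univ] at this
      lia
    obtain ⟨v, hv, hcond⟩ := h.exists_insertAt hd hi hUi
    have hcard (j : ι) : #(insertAt U i v j) + (s - Pi.single i 1 : ι → ℕ) j = #(U j) + s j := by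
      rw [card_insertAt hv, add_assoc, add_comm (Pi.single i 1 j), ← sub_single_add_single hi j,
        Pi.sub_apply]
    have hsum := sum_sub_single_add hi univ
    rw [if_pos (mem_univ i)] at hsum
    obtain ⟨R, hsub, hR, hcut⟩ := ih hcond (fun j ↦ (hcard j).trans_le (hs j)) (by lia)
    exact ⟨R, fun j ↦ (subset_insertAt U i v j).trans (hsub j),
      fun j ↦ (hR j).trans (hcard j), hcut⟩

theorem exists_cutCondition_iff_subpartitionCondition (hd : IsIntersectingSubmodular d)
    (hs : ∀ i, #(U i) + s i ≤ Fintype.card V) :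
    (∃ R : ι → Finset V, (∀ i, U i ⊆ R i) ∧ (∀ i, #(R i) = #(U i) + s i) ∧ CutCondition d R) ↔
      SubpartitionCondition d U s := by
  refine ⟨fun ⟨R, hsub, hR, hcut⟩ ↦ ?_, fun h ↦ h.exists_cutCondition hd hs⟩
  convert hcut.subpartitionCondition U using 2 with i
  rw [card_sdiff_of_subset (hsub i), hR i, Nat.add_sub_cancel_left]

end RootExtension

section TightSets

variable {V : Type} {ι : Type*} [Fintype ι] {d : Finset V → ℕ} {R : ι → Finset V} {i : ι}
  {X Y : Finset V}

/-- The sets obstructing the growth of the `i`-th branching: Edmonds' condition holds with equality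
at `X`, and `X` contains vertices both inside and outside `R i`, so that an arc which enters `X` and
is used to enlarge `R i` spoils the condition at `X`. -/
structure IsTightCrossing (d : Finset V → ℕ) (R : ι → Finset V) (i : ι) (X : Finset V) : Prop where
  card_missed_eq : #(missed R univ X) = d X
  not_disjoint : ¬Disjoint X (R i)
  not_subset : ¬X ⊆ R i

theorem CutCondition.isTightCrossing_inter (h : CutCondition d R) (hd : IsIntersectingSubmodular d)
    (hX : IsTightCrossing d R i X) (hY : IsTightCrossing d R i Y) (hXY : ¬X ∩ Y ⊆ R i) :
    IsTightCrossing d R i (X ∩ Y) := by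
  have hne : (X ∩ Y).Nonempty := nonempty_iff_ne_empty.2 fun h ↦ hXY (h ▸ empty_subset _)
  have hsubmod := hd X Y (not_disjoint_iff_nonempty_inter.2 hne)
  have hinter := h (X ∩ Y) hne
  have hunion := h (X ∪ Y) (hne.mono (inter_subset_left.trans subset_union_left))
  have hXeq := hX.card_missed_eq
  have hYeq := hY.card_missed_eq
  refine ⟨?_, fun hdisj ↦ ?_, hXY⟩
  · have := card_missed_add_card_missed_le (U := R) (I := univ) (X := X) (Y := Y)
    lia
  · have := card_missed_add_card_missed_lt (mem_missed.2 ⟨mem_univ i, hdisj⟩) hX.not_disjoint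
      hY.not_disjoint
    lia

theorem CutCondition.exists_minimal_isTightCrossing [Fintype V] (h : CutCondition d R)
    (hd : d univ = 0) (hRi : R i ≠ univ) : ∃ X, Minimal (IsTightCrossing d R i) X := by
  obtain ⟨v, -⟩ : ∃ v, v ∉ R i := by simpa [eq_univ_iff_forall] using hRi
  have hmissed : #(missed R univ univ) = 0 := Nat.eq_zero_of_le_zero (hd ▸ h univ ⟨v, mem_univ v⟩)
  refine exists_minimal_of_wellFoundedLT _ ⟨univ, by rw [hmissed, hd], fun hdisj ↦ ?_, ?_⟩
  · exact filter_eq_empty_iff.1 (card_eq_zero.1 hmissed) (mem_univ i) hdisj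
  · rwa [univ_subset_iff]

theorem CutCondition.lt_sdiff (h : CutCondition d R) (hX : IsTightCrossing d R i X) :
    d X < d (X \ R i) := by
  rw [← hX.card_missed_eq]
  refine (card_lt_card ?_).trans_le (h _ (sdiff_nonempty.2 hX.not_subset))
  refine (ssubset_iff_of_subset (missed_anti_right sdiff_subset)).2 ⟨i, ?_, fun hi ↦ ?_⟩
  · exact mem_missed.2 ⟨mem_univ i, disjoint_sdiff_self_left⟩
  · exact hX.not_disjoint (mem_missed.1 hi).2

end TightSets

section InDegree

variable {V α : Type} {tail head : α → V} {A B : Finset α} {X Y : Finset V} {e : α}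

theorem isIntersectingSubmodular_inDeg : IsIntersectingSubmodular (inDeg tail head A) := by
  intro X Y _
  simp only [inDeg, card_filter]
  rw [← sum_add_distrib, ← sum_add_distrib]
  refine sum_le_sum fun a _ ↦ ?_
  simp only [mem_inter, mem_union]
  grind

theorem inDeg_univ [Fintype V] : inDeg tail head A univ = 0 := by
  simp [inDeg]

theorem inDeg_erase_add_one (heA : e ∈ A) (htail : tail e ∉ X) (hhead : head e ∈ X) :
    inDeg tail head (A.erase e) X + 1 = inDeg tail head A X := by
  rw [inDeg, filter_erase]
  exact card_erase_add_one (mem_filter.2 ⟨heA, htail, hhead⟩)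

theorem inDeg_erase_of_not_enters (he : ¬(tail e ∉ X ∧ head e ∈ X)) :
    inDeg tail head (A.erase e) X = inDeg tail head A X := by
  have hmem : e ∉ {a ∈ A | tail a ∉ X ∧ head a ∈ X} := fun h ↦ he (mem_filter.1 h).2
  rw [inDeg, filter_erase, erase_eq_of_notMem hmem, inDeg]

theorem exists_arc_of_inDeg_lt (hYX : Y ⊆ X) (hlt : inDeg tail head A X < inDeg tail head A Y) :
    ∃ e ∈ A, tail e ∈ X \ Y ∧ head e ∈ Y := by
  contrapose! hlt
  refine card_le_card fun a ha ↦ ?_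
  obtain ⟨haA, htail, hhead⟩ := mem_filter.1 ha
  exact mem_filter.2 ⟨haA, fun h ↦ hlt a haA (mem_sdiff.2 ⟨h, htail⟩) hhead, hYX hhead⟩

theorem DiReach.mono (hAB : A ⊆ B) {u w : V} (h : DiReach tail head A u w) :
    DiReach tail head B u w :=
  Relation.ReflTransGen.mono (fun _ _ ⟨a, ha, hu, hw⟩ ↦ ⟨a, hAB ha, hu, hw⟩) _ _ h

theorem DiReach.inDeg_pos {r v : V} (h : DiReach tail head A r v) (hr : r ∉ X) (hv : v ∈ X) :
    0 < inDeg tail head A X := by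
  induction h with
  | refl => exact absurd hv hr
  | @tail u w _ hstep ih =>
    by_cases hu : u ∈ X
    · exact ih hu
    · obtain ⟨a, ha, rfl, rfl⟩ := hstep
      exact card_pos.2 ⟨a, mem_filter.2 ⟨ha, hu, hv⟩⟩

theorem sum_inDeg_le {ι : Type*} [Fintype ι] {F : ι → Finset α} (hsub : ∀ i, F i ⊆ A)
    (hdisj : ∀ i j, i ≠ j → Disjoint (F i) (F j)) :
    ∑ i, inDeg tail head (F i) X ≤ inDeg tail head A X := by
  simp only [inDeg]
  rw [← card_biUnion fun i _ j _ hij ↦ (hdisj i j hij).mono (filter_subset _ _) (filter_subset _ _)]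
  exact card_le_card (biUnion_subset.2 fun i _ ↦ filter_subset_filter _ (hsub i))

variable {ι : Type*} [Fintype ι] {R : ι → Finset V} {i : ι}

-- A tight set meeting `R i` and entered by `e` would intersect `X` in a smaller tight crossing set.
theorem CutCondition.erase_arc (h : CutCondition (inDeg tail head A) R)
    (hX : Minimal (IsTightCrossing (inDeg tail head A) R i) X) (heA : e ∈ A) (htail : tail e ∈ X)
    (hhead : head e ∈ X \ R i) :
    CutCondition (inDeg tail head (A.erase e)) (insertAt R i (head e)) := by
  intro Y hY
  have hle := h Y hY
  by_cases he : tail e ∉ Y ∧ head e ∈ Y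
  · have hdeg := inDeg_erase_add_one heA he.1 he.2
    rw [missed_insertAt, if_pos he.2]
    by_cases hi : i ∈ missed R univ Y
    · have := card_erase_add_one hi
      lia
    · rw [erase_eq_of_notMem hi]
      suffices #(missed R univ Y) ≠ inDeg tail head A Y by lia
      intro htight
      have hXY : ¬X ∩ Y ⊆ R i := fun hsub ↦ (mem_sdiff.1 hhead).2
        (hsub (mem_inter.2 ⟨(mem_sdiff.1 hhead).1, he.2⟩))
      have hYcross : IsTightCrossing (inDeg tail head A) R i Y :=
        ⟨htight, fun hdisj ↦ hi (mem_missed.2 ⟨mem_univ i, hdisj⟩),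
          fun hsub ↦ hXY (inter_subset_right.trans hsub)⟩
      have hinter := h.isTightCrossing_inter isIntersectingSubmodular_inDeg hX.prop hYcross hXY
      exact he.1 (mem_inter.1 (hX.le_of_le hinter inter_subset_left htail)).2
  · rw [inDeg_erase_of_not_enters he]
    exact (card_le_card (missed_insertAt_subset _)).trans hle

theorem CutCondition.exists_erase_arc [Fintype V] (h : CutCondition (inDeg tail head A) R)
    (hRi : R i ≠ univ) :
    ∃ e ∈ A, tail e ∈ R i ∧ head e ∉ R i ∧
      CutCondition (inDeg tail head (A.erase e)) (insertAt R i (head e)) := by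
  obtain ⟨X, hX⟩ := h.exists_minimal_isTightCrossing inDeg_univ hRi
  obtain ⟨e, heA, htail, hhead⟩ := exists_arc_of_inDeg_lt sdiff_subset (h.lt_sdiff hX.prop)
  rw [sdiff_sdiff_right_self, inf_eq_inter, mem_inter] at htail
  exact ⟨e, heA, htail.2, (mem_sdiff.1 hhead).2, h.erase_arc hX heA htail.1 hhead⟩

end InDegree

section BranchingPackings

variable {V α : Type} {tail head : α → V}

theorem IsBranching.inDeg_pos {S R X : Finset V} {B : Finset α} (h : IsBranching tail head S B R)
    (hXS : X ⊆ S) (hX : X.Nonempty) (hXR : Disjoint X R) : 0 < inDeg tail head B X := by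
  obtain ⟨-, -, -, -, hreach⟩ := h
  obtain ⟨v, hv⟩ := hX
  obtain ⟨r, hr, hrv⟩ := hreach v (hXS hv)
  exact hrv.inDeg_pos (disjoint_right.1 hXR hr) hv

theorem isBranching_empty (S : Finset V) : IsBranching tail head S ∅ S :=
  ⟨subset_rfl, by simp, by simp, fun _ hv hvS ↦ absurd hv hvS, fun v hv ↦ ⟨v, hv, .refl⟩⟩

theorem IsBranching.insert_arc {S R : Finset V} {B : Finset α} {e : α}
    (h : IsBranching tail head S B (insert (head e) R)) (htail : tail e ∈ R) (hhead : head e ∉ R) :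
    IsBranching tail head S (insert e B) R := by
  obtain ⟨hRS, hends, hroot, hindeg, hreach⟩ := h
  rw [insert_subset_iff] at hRS
  refine ⟨hRS.2, forall_mem_insert .. |>.2 ⟨⟨hRS.2 htail, hRS.1⟩, hends⟩, fun r hr ↦ ?_,
    fun v hv hvR ↦ ?_, fun v hv ↦ ?_⟩
  · exact forall_mem_insert .. |>.2
      ⟨fun h ↦ hhead (h ▸ hr), hroot r (mem_insert_of_mem hr)⟩
  · rw [filter_insert]
    split_ifs with hev
    · subst hev
      rw [filter_false_of_mem (hroot _ (mem_insert_self _ _)), insert_empty_eq, card_singleton]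
    · exact hindeg v hv fun h ↦ (mem_insert.1 h).elim (fun h ↦ hev h.symm) hvR
  · obtain ⟨r, hr, hrv⟩ := hreach v hv
    have hrv := hrv.mono (subset_insert e B)
    rcases mem_insert.1 hr with rfl | hr
    · exact ⟨tail e, htail, .head ⟨e, mem_insert_self _ _, rfl, rfl⟩ hrv⟩
    · exact ⟨r, hr, hrv⟩

variable [Fintype V] {ι : Type*}

/-- A packing of spanning branchings: the arc sets `F i` are pairwise disjoint subsets of `A`, and
`F i` is a branching on all vertices with root set `R i`. -/
structure IsBranchingPacking (tail head : α → V) (A : Finset α) (R : ι → Finset V)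
    (F : ι → Finset α) : Prop where
  subset : ∀ i, F i ⊆ A
  disjoint : ∀ i j, i ≠ j → Disjoint (F i) (F j)
  isBranching : ∀ i, IsBranching tail head univ (F i) (R i)

variable {A : Finset α} {R : ι → Finset V} {F : ι → Finset α} {i : ι} {e : α}

theorem IsBranchingPacking.insert_arc
    (h : IsBranchingPacking tail head (A.erase e) (insertAt R i (head e)) F) (heA : e ∈ A)
    (htail : tail e ∈ R i) (hhead : head e ∉ R i) :
    IsBranchingPacking tail head A R (insertAt F i e) where
  subset j := by
    have hsub (j : ι) : F j ⊆ A := (h.subset j).trans (erase_subset e A)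
    by_cases hj : j = i
    · rw [hj, insertAt_self]
      exact insert_subset heA (hsub i)
    · rw [insertAt_of_ne F e hj]
      exact hsub j
  disjoint := by
    have he (j : ι) : e ∉ F j := fun hej ↦ notMem_erase e A (h.subset j hej)
    intro j l hjl
    by_cases hj : j = i
    · subst hj
      rw [insertAt_self, insertAt_of_ne F e hjl.symm, disjoint_insert_left]
      exact ⟨he l, h.disjoint j l hjl⟩
    rw [insertAt_of_ne F e hj]
    by_cases hl : l = i
    · subst hl
      rw [insertAt_self, disjoint_insert_right]
      exact ⟨he j, h.disjoint j l hjl⟩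
    · rw [insertAt_of_ne F e hl]
      exact h.disjoint j l hjl
  isBranching j := by
    have hj := h.isBranching j
    by_cases hji : j = i
    · subst hji
      rw [insertAt_self] at hj ⊢
      exact hj.insert_arc htail hhead
    · rwa [insertAt_of_ne R _ hji, ← insertAt_of_ne F e hji] at hj

variable [Fintype ι]

theorem IsBranchingPacking.cutCondition (h : IsBranchingPacking tail head A R F) :
    CutCondition (inDeg tail head A) R := fun X hX ↦
  calc #(missed R univ X)
    _ = ∑ i, if Disjoint X (R i) then 1 else 0 := card_filter ..
    _ ≤ ∑ i, inDeg tail head (F i) X := sum_le_sum fun i _ ↦ by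
      split_ifs with hXR
      · exact (h.isBranching i).inDeg_pos (subset_univ X) hX hXR
      · exact Nat.zero_le _
    _ ≤ inDeg tail head A X := sum_inDeg_le h.subset h.disjoint

theorem CutCondition.exists_isBranchingPacking (h : CutCondition (inDeg tail head A) R) :
    ∃ F, IsBranchingPacking tail head A R F := by
  induction R using WellFoundedGT.induction generalizing A with
  | ind R ih =>
    by_cases hR : ∀ i, R i = univ
    · refine ⟨fun _ ↦ ∅, fun _ ↦ empty_subset A, fun _ _ _ ↦ disjoint_empty_left _, fun i ↦ ?_⟩
      rw [hR i]
      exact isBranching_empty univ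
    · obtain ⟨i, hRi⟩ := not_forall.1 hR
      obtain ⟨e, heA, htail, hhead, hcut⟩ := h.exists_erase_arc hRi
      obtain ⟨F, hF⟩ := ih _ (lt_insertAt hhead) hcut
      exact ⟨insertAt F i e, hF.insert_arc heA htail hhead⟩

/-- **Edmonds' disjoint branchings theorem.** -/
theorem exists_isBranchingPacking_iff_cutCondition :
    (∃ F, IsBranchingPacking tail head A R F) ↔ CutCondition (inDeg tail head A) R :=
  ⟨fun ⟨_, hF⟩ ↦ hF.cutCondition, CutCondition.exists_isBranchingPacking⟩

end BranchingPackings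

theorem pack_branchings_general {V α : Type} {ι : Type*} [Fintype V] [Finite ι]
    (tail head : α → V) (A : Finset α) (c : ι → ℕ) (U : ι → Finset V)
    (hc : ∀ i, c i ≤ Fintype.card V) (hU : ∀ i, #(U i) ≤ c i) :
    (∃ (F : ι → Finset α) (R : ι → Finset V), (∀ i, F i ⊆ A) ∧
        (∀ i j, i ≠ j → Disjoint (F i) (F j)) ∧
        ∀ i, IsBranching tail head univ (F i) (R i) ∧ U i ⊆ R i ∧ #(R i) = c i) ↔
      ∀ (I : Finset ι) (P : Finset (Finset V)), IsSubpartition P →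
        (∑ X ∈ P, (#{i ∈ I | X ∩ U i = ∅} : ℤ)) - (∑ i ∈ I, ((c i : ℤ) - (#(U i) : ℤ))) ≤
          ∑ X ∈ P, (inDeg tail head A X : ℤ) := by
  have := Fintype.ofFinite ι
  have hsum (i : ι) : #(U i) + (c i - #(U i)) = c i := Nat.add_sub_of_le (hU i)
  rw [← subpartitionCondition_iff_int hsum, ← exists_cutCondition_iff_subpartitionCondition
    isIntersectingSubmodular_inDeg fun i ↦ (hsum i).trans_le (hc i)]
  simp only [hsum, ← exists_isBranchingPacking_iff_cutCondition]
  constructor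
  · rintro ⟨F, R, hsub, hdisj, hR⟩
    exact ⟨R, fun i ↦ (hR i).2.1, fun i ↦ (hR i).2.2, F, hsub, hdisj, fun i ↦ (hR i).1⟩
  · rintro ⟨R, hUR, hcard, F, hF⟩
    exact ⟨F, R, hF.subset, hF.disjoint, fun i ↦ ⟨hF.isBranching i, hUR i, hcard i⟩⟩

/-- **Lemma (packing spanning branchings with prescribed roots).**  For `k ≥ 0`, integers
`c_1, …, c_{k+1} ≤ |V|` and sets `U_1, …, U_{k+1} ⊆ V` with `|U_i| ≤ c_i`, there exist
pairwise arc-disjoint spanning branchings `F_1, …, F_{k+1}` with `R(F_i) ⊇ U_i` and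
`|R(F_i)| = c_i` if and only if for every `I ⊆ {1,…,k+1}` and every subpartition `P` of `V`:
`∑_{X∈P} d_A^-(X) ≥ ∑_{X∈P} |{i ∈ I : X ∩ U_i = ∅}| - ∑_{i∈I} (c_i - |U_i|)`. -/
theorem pack_branchings {V α : Type} [Fintype V] [Nonempty V] [Fintype α]
    (tail head : α → V) (hloopless : ∀ a : α, tail a ≠ head a)
    (k : ℕ) (c : Fin (k + 1) → ℕ) (U : Fin (k + 1) → Finset V)
    (hc : ∀ i, c i ≤ Fintype.card V) (hU : ∀ i, (U i).card ≤ c i) :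
    (∃ (F : Fin (k + 1) → Finset α) (R : Fin (k + 1) → Finset V),
        (∀ i j, i ≠ j → Disjoint (F i) (F j)) ∧
        ∀ i, IsBranching tail head Finset.univ (F i) (R i) ∧
          U i ⊆ R i ∧ (R i).card = c i) ↔
    (∀ (I : Finset (Fin (k + 1))) (P : Finset (Finset V)), IsSubpartition P →
      (∑ X ∈ P, ((I.filter fun i => X ∩ U i = ∅).card : ℤ)) -
          (∑ i ∈ I, ((c i : ℤ) - ((U i).card : ℤ))) ≤
        ∑ X ∈ P, (inDeg tail head (Finset.univ : Finset α) X : ℤ)) := by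
  simpa only [Finset.subset_univ, implies_true, true_and] using
    pack_branchings_general tail head Finset.univ c U hc hU
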